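/- arXiv:0704.1463 — 3 statements merged into one kernel-verified Lean document; each statement's English description precedes it below -/
import Mathlib

section
/- Let 0 < μ < 1 and θ₀(μ) = μ − 1 − log μ. Then Σ_{k=1}^∞ e^{θ₀(μ)k}·e^{−kμ}(kμ)^{k−1}/k! = 1/μ, i.e. the exponential moment of the Borel(μ) distribution at the boundary point θ₀(μ) of its effective domain is finite and equals 1/μ. -/
/-- The Borel(μ) weight `p_μ(k) = e^{-kμ} (kμ)^{k-1} / k!`, written for `k = n+1`. -/
noncomputable def borelWeight (μ : ℝ) (n : ℕ) : ℝ :=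
  Real.exp (-((n : ℝ) + 1) * μ) * (((n : ℝ) + 1) * μ) ^ n / (Nat.factorial (n + 1) : ℝ)

/-!
Multiplying by `μ e` reduces the claim to `Σ_n (n+1)^n / (n+1)! * e^{-n} = e`, an instance at
`t = 1` of `Σ_n (n+1)^n / (n+1)! * (t e^{-t})^n = e^t`, which inverts `t ↦ t e^{-t}`. For small `t`
one divides by `e^t`, expands the exponentials `e^{-(n+1)t}` and collects powers of `t`: the
coefficient of `t^m` is, up to a factor, the `(m+1)`-st finite difference of `x ↦ x^m`, so only
`m = 0` survives. Analyticity carries the identity to `[0, 1)`. By Stirling's formula the series in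
`x = t e^{-t}` still converges absolutely at `|x| = e⁻¹`, so continuity carries it to `t = 1`.
-/

open Real
open Finset.HasAntidiagonal (antidiagonal mem_antidiagonal)
open Set (EqOn Icc Ico)
open scoped Nat

section PowerSeries

variable {𝕜 : Type*} [NontriviallyNormedField 𝕜] [CompleteSpace 𝕜] {c : ℕ → 𝕜} {r : ℝ} {x : 𝕜}

lemma summable_mul_pow_of_norm_le (hc : Summable fun n ↦ ‖c n‖ * r ^ n) (hx : ‖x‖ ≤ r) :
    Summable fun n ↦ c n * x ^ n := by
  refine hc.of_norm_bounded fun n ↦ ?_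
  rw [norm_mul, norm_pow]
  gcongr

lemma continuousOn_tsum_mul_pow (hc : Summable fun n ↦ ‖c n‖ * r ^ n) :
    ContinuousOn (fun x ↦ ∑' n, c n * x ^ n) (Metric.closedBall 0 r) := by
  refine continuousOn_tsum (fun n ↦ by fun_prop) hc fun n x hx ↦ ?_
  rw [mem_closedBall_zero_iff] at hx
  rw [norm_mul, norm_pow]
  gcongr

lemma analyticAt_tsum_mul_pow (hc : Summable fun n ↦ ‖c n‖ * r ^ n) (hx : ‖x‖ < r) :
    AnalyticAt 𝕜 (fun x ↦ ∑' n, c n * x ^ n) x := by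
  lift r to NNReal using (norm_nonneg x).trans hx.le
  set p := FormalMultilinearSeries.ofScalars 𝕜 c
  have hr : (r : ENNReal) ≤ p.radius :=
    p.le_radius_of_summable (by simpa only [p, FormalMultilinearSeries.ofScalars_norm] using hc)
  have hxr : x ∈ Metric.eball 0 p.radius := by
    refine Metric.eball_subset_eball hr ?_
    simpa [Metric.eball_coe] using hx
  have hp : p.sum = fun x ↦ ∑' n, c n * x ^ n :=
    FormalMultilinearSeries.ofScalarsSum_eq_tsum c
  rw [← hp]
  exact (p.hasFPowerSeriesOnBall (Metric.pos_of_mem_eball hxr)).analyticAt_of_mem hxr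

end PowerSeries

lemma hasSum_sum_antidiagonal {A α : Type*} [AddMonoid A] [Finset.HasAntidiagonal A]
    [AddCommMonoid α] [TopologicalSpace α] [ContinuousAdd α] [RegularSpace α]
    {f : A × A → α} {a : α} (hf : HasSum f a) :
    HasSum (fun n ↦ ∑ p ∈ antidiagonal n, f p) a := by
  refine (Finset.HasAntidiagonal.sigmaAntidiagonalEquivProd.hasSum_iff.mpr hf).sigma fun n ↦ ?_
  rw [← Finset.sum_coe_sort]
  exact hasSum_fintype _

lemma hasSum_pow_div_factorial (x : ℝ) : HasSum (fun n : ℕ ↦ x ^ n / n !) (exp x) := by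
  rw [exp_eq_exp_ℝ]
  exact NormedSpace.expSeries_div_hasSum_exp x

lemma mul_exp_neg_lt_exp_neg_one {t : ℝ} (ht : t ≠ 1) : t * exp (-t) < exp (-1) := by
  have hlt : t < exp (t - 1) := by
    simpa using add_one_lt_exp (sub_ne_zero.mpr ht)
  calc t * exp (-t) < exp (t - 1) * exp (-t) := by gcongr
    _ = exp (-1) := by rw [← exp_add]; ring_nf

lemma sum_antidiagonal_neg_one_pow_mul_choose_mul_pow {R : Type*} [CommRing R] {i m : ℕ}
    (hi : i ≠ 0) (him : i ≤ m) :
    ∑ p ∈ antidiagonal m, (-1) ^ p.2 * ((m + 1).choose (p.1 + 1) : R) * (p.1 + 1 : R) ^ i = 0 := by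
  have hdiff := congrFun (fwdDiff_iter_pow_eq_zero_of_lt (R := R) (Nat.lt_succ_of_le him)) 0
  rw [fwdDiff_iter_eq_sum_shift, Finset.sum_range_succ'] at hdiff
  rw [Finset.Nat.sum_antidiagonal_eq_sum_range_succ_mk]
  simpa [hi] using hdiff

/-- The coefficient of `x ^ n` in `T(x) / x`, where `T(x) = Σ_{k ≥ 1} k^{k-1} x^k / k!` is Cayley's
tree function. -/
noncomputable def treeCoeff (n : ℕ) : ℝ := (n + 1 : ℝ) ^ n / (n + 1)!

/-- The series `T(x) / x = e^{T(x)}` of Cayley's tree function `T`, with junk value `0` where it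
diverges, that is for `|x| > e⁻¹`. -/
noncomputable def treeSeries (x : ℝ) : ℝ := ∑' n, treeCoeff n * x ^ n

lemma treeCoeff_nonneg (n : ℕ) : 0 ≤ treeCoeff n := by
  unfold treeCoeff
  positivity

lemma treeCoeff_mul_exp_neg_one_pow_le (n : ℕ) :
    treeCoeff n * exp (-1) ^ n ≤ exp 1 * (1 / ((n + 1 : ℕ) : ℝ) ^ (3 / 2 : ℝ)) := by
  have hN : (0 : ℝ) < (n + 1 : ℕ) := by positivity
  have hpow : ((n + 1 : ℕ) : ℝ) ^ (3 / 2 : ℝ) = (n + 1 : ℕ) * √(n + 1 : ℕ) := by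
    rw [sqrt_eq_rpow, ← rpow_one_add' hN.le (by norm_num)]
    norm_num
  have hstirling : √(n + 1 : ℕ) * ((n + 1 : ℕ) / exp 1) ^ (n + 1) ≤ ((n + 1)! : ℝ) := by
    refine le_trans ?_ (Stirling.le_factorial_stirling (n + 1))
    gcongr
    nlinarith [pi_gt_three]
  rw [hpow, treeCoeff, exp_neg, div_mul_eq_mul_div, div_le_iff₀ (by positivity)]
  calc (n + 1 : ℝ) ^ n * (exp 1)⁻¹ ^ n
      = exp 1 * (1 / ((n + 1 : ℕ) * √(n + 1 : ℕ))) *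
          (√(n + 1 : ℕ) * ((n + 1 : ℕ) / exp 1) ^ (n + 1)) := by
        rw [inv_pow, div_pow, pow_succ _ n, pow_succ _ n]
        push_cast
        field_simp
    _ ≤ _ := by gcongr

lemma summable_norm_treeCoeff_mul_exp_neg_one_pow :
    Summable fun n ↦ ‖treeCoeff n‖ * exp (-1) ^ n := by
  simp only [Real.norm_of_nonneg (treeCoeff_nonneg _)]
  have hpseries : Summable fun n : ℕ ↦ 1 / ((n + 1 : ℕ) : ℝ) ^ (3 / 2 : ℝ) :=
    (summable_nat_add_iff 1).mpr (summable_one_div_nat_rpow.mpr (by norm_num))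
  refine (hpseries.mul_left (exp 1)).of_nonneg_of_le (fun n ↦ ?_)
    treeCoeff_mul_exp_neg_one_pow_le
  have := treeCoeff_nonneg n
  positivity

lemma summable_treeCoeff_mul_pow {x : ℝ} (hx : |x| ≤ exp (-1)) :
    Summable fun n ↦ treeCoeff n * x ^ n :=
  summable_mul_pow_of_norm_le summable_norm_treeCoeff_mul_exp_neg_one_pow hx

lemma continuousOn_treeSeries : ContinuousOn treeSeries (Metric.closedBall 0 (exp (-1))) :=
  continuousOn_tsum_mul_pow summable_norm_treeCoeff_mul_exp_neg_one_pow

lemma analyticAt_treeSeries {x : ℝ} (hx : |x| < exp (-1)) : AnalyticAt ℝ treeSeries x :=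
  analyticAt_tsum_mul_pow summable_norm_treeCoeff_mul_exp_neg_one_pow hx

/-- The double series obtained from `Σ_n treeCoeff n * t ^ n * e^{-(n+1)t}` by expanding the
exponentials; the entry `(n, j)` is the term of degree `n + j` in `t`. -/
noncomputable def treeDoubleTerm (t : ℝ) (p : ℕ × ℕ) : ℝ :=
  treeCoeff p.1 * t ^ p.1 * ((-(p.1 + 1) * t) ^ p.2 / p.2 !)

lemma treeDoubleTerm_eq_mul_choose (t : ℝ) (k j : ℕ) :
    treeDoubleTerm t (k, j) = t ^ (k + j) / (k + j + 1)! *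
      ((-1) ^ j * ((k + j + 1).choose (k + 1) : ℝ) * (k + 1 : ℝ) ^ (k + j)) := by
  have hchoose : ((k + j + 1)! : ℝ) = (k + j + 1).choose (k + 1) * (k + 1)! * j ! := by
    have := Nat.choose_mul_factorial_mul_factorial (show k + 1 ≤ k + j + 1 by lia)
    rw [show k + j + 1 - (k + 1) = j by lia] at this
    exact_mod_cast this.symm
  have hchoose_ne_zero : ((k + j + 1).choose (k + 1) : ℝ) ≠ 0 :=
    Nat.cast_ne_zero.mpr (Nat.choose_pos (by lia)).ne'
  rw [hchoose, treeDoubleTerm, treeCoeff, neg_mul, neg_pow, mul_pow]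
  field_simp
  ring

lemma sum_antidiagonal_treeDoubleTerm (t : ℝ) (m : ℕ) :
    ∑ p ∈ antidiagonal m, treeDoubleTerm t p = if m = 0 then 1 else 0 := by
  split_ifs with hm
  · simp [hm, treeDoubleTerm, treeCoeff]
  calc ∑ p ∈ antidiagonal m, treeDoubleTerm t p
      = ∑ p ∈ antidiagonal m, t ^ m / (m + 1)! *
          ((-1) ^ p.2 * ((m + 1).choose (p.1 + 1) : ℝ) * (p.1 + 1 : ℝ) ^ m) := by
        refine Finset.sum_congr rfl fun p hp ↦ ?_
        rw [← mem_antidiagonal.mp hp, ← treeDoubleTerm_eq_mul_choose]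
    _ = 0 := by
        rw [← Finset.mul_sum, sum_antidiagonal_neg_one_pow_mul_choose_mul_pow hm le_rfl, mul_zero]

lemma norm_treeDoubleTerm (t : ℝ) (n j : ℕ) :
    ‖treeDoubleTerm t (n, j)‖ = treeCoeff n * |t| ^ n * (((n + 1) * |t|) ^ j / j !) := by
  have hn : |(n : ℝ) + 1| = n + 1 := abs_of_nonneg (by positivity)
  simp only [treeDoubleTerm, norm_eq_abs, abs_mul, abs_div, abs_pow, abs_neg, hn, Nat.abs_cast,
    abs_of_nonneg (treeCoeff_nonneg n)]

lemma summable_treeDoubleTerm {t : ℝ} (ht : |t| * exp |t| ≤ exp (-1)) :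
    Summable (treeDoubleTerm t) := by
  have hrow (n : ℕ) : HasSum (fun j ↦ ‖treeDoubleTerm t (n, j)‖)
      (treeCoeff n * |t| ^ n * exp ((n + 1) * |t|)) := by
    simp only [norm_treeDoubleTerm]
    exact (hasSum_pow_div_factorial _).mul_left _
  have hexp (n : ℕ) : treeCoeff n * |t| ^ n * exp ((n + 1) * |t|) =
      exp |t| * (treeCoeff n * (|t| * exp |t|) ^ n) := by
    rw [mul_pow, ← exp_nat_mul, add_mul, one_mul, exp_add]
    ring
  refine .of_norm ((summable_prod_of_nonneg fun _ ↦ norm_nonneg _).mpr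
    ⟨fun n ↦ (hrow n).summable, ?_⟩)
  simp only [(hrow _).tsum_eq, hexp]
  exact (summable_treeCoeff_mul_pow (by rwa [abs_of_nonneg (by positivity)])).mul_left _

lemma hasSum_treeCoeff_mul_pow_mul_exp {t : ℝ} (ht : |t| * exp |t| ≤ exp (-1)) :
    HasSum (fun n : ℕ ↦ treeCoeff n * t ^ n * exp (-(n + 1) * t)) 1 := by
  have hdouble := (summable_treeDoubleTerm ht).hasSum
  have hdiag := hasSum_sum_antidiagonal hdouble
  simp only [sum_antidiagonal_treeDoubleTerm] at hdiag
  rw [hdiag.unique (hasSum_ite_eq 0 1)] at hdouble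
  exact hdouble.prod_fiberwise fun n ↦ (hasSum_pow_div_factorial (-(n + 1) * t)).mul_left _

lemma treeSeries_mul_exp_neg_of_abs_mul_exp_abs_le {t : ℝ} (ht : |t| * exp |t| ≤ exp (-1)) :
    treeSeries (t * exp (-t)) = exp t := by
  have hterm (n : ℕ) : treeCoeff n * (t * exp (-t)) ^ n =
      exp t * (treeCoeff n * t ^ n * exp (-(n + 1) * t)) := by
    have hexp : exp (-t) ^ n = exp t * exp (-(n + 1) * t) := by
      rw [← exp_nat_mul, ← exp_add]
      ring_nf
    rw [mul_pow, hexp]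
    ring
  simpa only [treeSeries, hterm, mul_one] using
    ((hasSum_treeCoeff_mul_pow_mul_exp ht).mul_left (exp t)).tsum_eq

lemma eqOn_treeSeries_mul_exp_neg_Ico :
    EqOn (fun t ↦ treeSeries (t * exp (-t))) exp (Ico 0 1) := by
  refine AnalyticOnNhd.eqOn_of_preconnected_of_eventuallyEq (𝕜 := ℝ) (z₀ := 0)
    (fun t ht ↦ ?_) (fun t _ ↦ by fun_prop) isPreconnected_Ico (by simp) ?_
  · have hlt : |t * exp (-t)| < exp (-1) := by
      rw [abs_of_nonneg (mul_nonneg ht.1 (exp_pos _).le)]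
      exact mul_exp_neg_lt_exp_neg_one ht.2.ne
    exact (analyticAt_treeSeries hlt).fun_comp (f := fun t ↦ t * exp (-t)) (by fun_prop)
  · have hcont : Continuous fun t : ℝ ↦ |t| * exp |t| := by fun_prop
    have hsmall : ∀ᶠ t : ℝ in nhds 0, |t| * exp |t| < exp (-1) :=
      hcont.continuousAt.eventually_lt_const (by simp [exp_pos])
    filter_upwards [hsmall] with t ht
    exact treeSeries_mul_exp_neg_of_abs_mul_exp_abs_le ht.le

lemma treeSeries_mul_exp_neg {t : ℝ} (ht : t ∈ Icc 0 1) :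
    treeSeries (t * exp (-t)) = exp t := by
  refine eqOn_treeSeries_mul_exp_neg_Ico.of_subset_closure ?_ continuous_exp.continuousOn
    Set.Ico_subset_Icc_self (closure_Ico zero_ne_one).ge ht
  refine continuousOn_treeSeries.comp (by fun_prop) fun t ht ↦ ?_
  rw [mem_closedBall_zero_iff, Real.norm_of_nonneg (mul_nonneg ht.1 (exp_pos _).le)]
  exact mul_exp_neg_le_exp_neg_one t

lemma hasSum_treeCoeff_mul_exp_neg_one_pow :
    HasSum (fun n ↦ treeCoeff n * exp (-1) ^ n) (exp 1) := by
  have hsum : treeSeries (exp (-1)) = exp 1 := by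
    simpa only [one_mul] using treeSeries_mul_exp_neg (Set.right_mem_Icc.mpr zero_le_one)
  rw [← hsum]
  exact (summable_treeCoeff_mul_pow (abs_exp _).le).hasSum

lemma exp_mul_borelWeight_at_boundary {μ : ℝ} (hμ : 0 < μ) (n : ℕ) :
    exp ((μ - 1 - log μ) * ((n : ℝ) + 1)) * borelWeight μ n =
      exp (-1) / μ * (treeCoeff n * exp (-1) ^ n) := by
  have hexp : exp ((μ - 1 - log μ) * ((n : ℝ) + 1)) = (exp μ * exp (-1) / μ) ^ (n + 1) := by
    rw [mul_comm, ← Nat.cast_succ, exp_nat_mul, exp_sub, exp_log hμ, sub_eq_add_neg, exp_add]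
  have hexp_neg : exp (-((n : ℝ) + 1) * μ) = (exp μ ^ (n + 1))⁻¹ := by
    rw [neg_mul, exp_neg, ← Nat.cast_succ, exp_nat_mul]
  rw [borelWeight, treeCoeff, hexp, hexp_neg, div_pow, mul_pow, mul_pow]
  field_simp
  ring

theorem borel_expMoment_at_boundary_general {μ : ℝ} (hμ : 0 < μ) :
    HasSum (fun n : ℕ => exp ((μ - 1 - log μ) * ((n : ℝ) + 1)) * borelWeight μ n) (1 / μ) := by
  have hsum := hasSum_treeCoeff_mul_exp_neg_one_pow.mul_left (exp (-1) / μ)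
  have hvalue : exp (-1) / μ * exp 1 = 1 / μ := by
    rw [div_mul_eq_mul_div, ← exp_add, neg_add_cancel, exp_zero]
  simpa only [exp_mul_borelWeight_at_boundary hμ, hvalue] using hsum

/-- For `0 < μ < 1` and `θ₀(μ) = μ - 1 - log μ`, we have
`Σ_{k=1}^∞ e^{θ₀(μ)k} p_μ(k) = 1/μ`: the exponential moment of Borel(μ) at the
boundary point of its effective domain is finite and equals `1/μ`. -/
theorem borel_expMoment_at_boundary (μ : ℝ) (hμ0 : 0 < μ) (hμ1 : μ < 1) :
    HasSum (fun n : ℕ => Real.exp ((μ - 1 - Real.log μ) * ((n : ℝ) + 1)) * borelWeight μ n)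
      (1 / μ) :=
  borel_expMoment_at_boundary_general hμ0
end

section
/- Let 0 < μ < 1, θ₀(μ) = μ − 1 − log μ, φ_μ(θ) = Σ_{k=1}^∞ e^{θk}·e^{−kμ}(kμ)^{k−1}/k!, ψ_μ(θ) = Σ_{k=1}^∞ k·e^{θk}·e^{−kμ}(kμ)^{k−1}/k!, and let ν > 0, x > 0 and θ < θ₀(μ). Then ψ_μ(θ) = x/ν if and only if φ_μ(θ) = x/(ν + μx). -/
/-- `φ_μ(θ) = Σ_{k=1}^∞ e^{θk} p_μ(k)`. -/
noncomputable def borelPhi (μ θ : ℝ) : ℝ :=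
  ∑' n : ℕ, Real.exp (θ * ((n : ℝ) + 1)) * borelWeight μ n

/-- `ψ_μ(θ) = Σ_{k=1}^∞ k e^{θk} p_μ(k)`. -/
noncomputable def borelPsi (μ θ : ℝ) : ℝ :=
  ∑' n : ℕ, ((n : ℝ) + 1) * Real.exp (θ * ((n : ℝ) + 1)) * borelWeight μ n

/-!
A partial function on a finite set splits the set into the points whose orbit runs off the domain,
which form a forest rooted at the points without an image, and the points whose orbit never ends,
on which it is an endofunction. For the exponential generating functions `F`, `E`, `P` of rooted
forests, endofunctions and partial functions this says `F * E = P`, while `E = 1 + z * P`.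
At `z = μ * exp (θ - μ)` the Borel series are `φ = exp (θ - μ) * F z` and `ψ = exp (θ - μ) * P z`,
so `φ * (1 + μ * ψ) = ψ`: either of `φ` and `ψ` is a Möbius function of the other.
-/

open Finset Real
open scoped Nat

section AbelIdentity

theorem choose_mul_choose_sub_comm (n i j : ℕ) :
    n.choose i * (n - i).choose j = n.choose j * (n - j).choose i := by
  have hi := Nat.choose_mul (n := n) (Nat.le_add_right i j)
  have hj := Nat.choose_mul (n := n) (Nat.le_add_left j i)
  rw [Nat.add_sub_cancel_left] at hi
  rw [Nat.add_sub_cancel] at hj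
  rw [← hi, ← hj, Nat.choose_symm_add]

variable {R : Type*} [CommRing R]

theorem succ_pow_pred_mul_neg_succ_pow {m i : ℕ} (him : i ≤ m + 1) :
    ((i : R) + 1) ^ (i - 1) * (-((i : R) + 1)) ^ (m + 1 - i) =
      (-1) ^ (m + 1 - i) * ((i : R) + 1) ^ m := by
  rcases i with _ | i
  · simp
  · rw [neg_pow, mul_left_comm, ← pow_add]
    congr 2
    omega

-- For `n > 0` the sum is the `n`-th forward difference of `r ↦ r ^ (n - 1)` at `1`.
theorem sum_choose_mul_succ_pow_pred_mul_neg_succ_pow (n : ℕ) :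
    ∑ i ∈ range (n + 1),
      (n.choose i : R) * (((i : R) + 1) ^ (i - 1) * (-((i : R) + 1)) ^ (n - i)) = 0 ^ n := by
  rcases n with _ | m
  · simp
  have fwdDiff_eq_zero :=
    congrFun (fwdDiff_iter_pow_eq_zero_of_lt (R := R) (Nat.lt_succ_self m)) 1
  rw [fwdDiff_iter_eq_sum_shift] at fwdDiff_eq_zero
  rw [zero_pow m.succ_ne_zero, ← Pi.zero_apply (M := fun _ : R ↦ R) 1, ← fwdDiff_eq_zero]
  refine sum_congr rfl fun i hi ↦ ?_
  rw [succ_pow_pred_mul_neg_succ_pow (mem_range_succ_iff.mp hi)]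
  simp only [nsmul_eq_mul, mul_one, zsmul_eq_mul, Int.cast_mul, Int.cast_pow, Int.cast_neg,
    Int.cast_one, Int.cast_natCast, Nat.succ_eq_add_one]
  ring

-- Abel's binomial identity, with its first parameter equal to `1`.
theorem sum_choose_mul_succ_pow_pred_mul_sub_succ_pow (n : ℕ) (y : R) :
    ∑ i ∈ range (n + 1),
      (n.choose i : R) * ((i : R) + 1) ^ (i - 1) * (y - ((i : R) + 1)) ^ (n - i) = y ^ n := by
  have choose_comm (i j : ℕ) : (n.choose i : R) * (n - i).choose j =
      n.choose j * (n - j).choose i := by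
    rw [← Nat.cast_mul, choose_mul_choose_sub_comm, Nat.cast_mul]
  calc
    _ = ∑ i ∈ range (n + 1), ∑ j ∈ range (n - i + 1), (n.choose j * y ^ j : R) *
          ((n - j).choose i * (((i : R) + 1) ^ (i - 1) * (-((i : R) + 1)) ^ (n - j - i))) := by
      refine sum_congr rfl fun i _ ↦ ?_
      rw [sub_eq_add_neg, add_pow y, mul_sum]
      refine sum_congr rfl fun j _ ↦ ?_
      rw [Nat.sub_right_comm n i j]
      linear_combination ((i : R) + 1) ^ (i - 1) * y ^ j * (-((i : R) + 1)) ^ (n - j - i) *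
        choose_comm i j
    _ = ∑ j ∈ range (n + 1), ∑ i ∈ range (n - j + 1), (n.choose j * y ^ j : R) *
          ((n - j).choose i * (((i : R) + 1) ^ (i - 1) * (-((i : R) + 1)) ^ (n - j - i))) :=
      sum_comm' fun i j ↦ by simp only [mem_range]; omega
    _ = ∑ j ∈ range (n + 1), (n.choose j * y ^ j : R) * 0 ^ (n - j) := by
      simp only [← mul_sum, sum_choose_mul_succ_pow_pred_mul_neg_succ_pow]
    _ = (y + 0) ^ n := by
      rw [add_pow]
      exact sum_congr rfl fun j _ ↦ by ring
    _ = y ^ n := by rw [add_zero]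

theorem sum_choose_mul_succ_pow_pred_mul_sub_pow (n : ℕ) :
    ∑ i ∈ range (n + 1), (n.choose i : R) * ((i : R) + 1) ^ (i - 1) * ((n - i : ℕ) : R) ^ (n - i) =
      ((n : R) + 1) ^ n := by
  rw [← sum_choose_mul_succ_pow_pred_mul_sub_succ_pow n ((n : R) + 1)]
  refine sum_congr rfl fun i hi ↦ ?_
  rw [Nat.cast_sub (mem_range_succ_iff.mp hi), add_sub_add_right_eq_sub]

end AbelIdentity

section GeneratingFunctions

theorem summable_norm_mul_pow_of_norm_le_succ_pow_div_factorial {A : Type*} [SeminormedRing A]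
    [NormOneClass A] {a : ℕ → A} {z : A} (ha : ∀ n, ‖a n‖ ≤ ((n : ℝ) + 1) ^ n / n !)
    (hz : ‖z‖ < exp (-1)) :
    Summable fun n ↦ ‖a n * z ^ n‖ := by
  have ratio_lt_one : exp 1 * ‖z‖ < 1 := by
    rwa [exp_neg, ← one_div, lt_div_iff₀' (exp_pos 1)] at hz
  refine .of_nonneg_of_le (fun n ↦ norm_nonneg _) (fun n ↦ ?_)
    ((summable_geometric_of_lt_one (by positivity) ratio_lt_one).mul_left (exp 1))
  calc
    ‖a n * z ^ n‖ ≤ ‖a n‖ * ‖z‖ ^ n :=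
      (norm_mul_le _ _).trans (by gcongr; exact norm_pow_le z n)
    _ ≤ exp (n + 1) * ‖z‖ ^ n := by
      gcongr
      exact (ha n).trans (pow_div_factorial_le_exp _ (by positivity) n)
    _ = exp 1 * (exp 1 * ‖z‖) ^ n := by rw [exp_add, mul_pow, ← exp_nat_mul, mul_one]; ring

variable {𝕜 : Type*} [RCLike 𝕜]

/-- The exponential generating function of rooted forests: there are `(n + 1) ^ (n - 1)` of them on
`n` labelled vertices. The truncated exponent at `n = 0` is harmless, its base being `1`. -/
noncomputable def rootedForestEGF (z : 𝕜) : 𝕜 :=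
  ∑' n : ℕ, ((n : 𝕜) + 1) ^ (n - 1) / n ! * z ^ n

/-- The exponential generating function of endofunctions of an `n`-element set. -/
noncomputable def endofunctionEGF (z : 𝕜) : 𝕜 :=
  ∑' n : ℕ, (n : 𝕜) ^ n / n ! * z ^ n

/-- The exponential generating function of partial functions from an `n`-element set to itself,
counted by `(n + 1) ^ n`: every element has an image or none. -/
noncomputable def partialFunctionEGF (z : 𝕜) : 𝕜 :=
  ∑' n : ℕ, ((n : 𝕜) + 1) ^ n / n ! * z ^ n

theorem summable_norm_rootedForestEGF {z : 𝕜} (hz : ‖z‖ < exp (-1)) :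
    Summable fun n : ℕ ↦ ‖((n : 𝕜) + 1) ^ (n - 1) / n ! * z ^ n‖ := by
  refine summable_norm_mul_pow_of_norm_le_succ_pow_div_factorial (fun n ↦ ?_) hz
  rw [← Nat.cast_add_one, norm_div, norm_pow, RCLike.norm_natCast, RCLike.norm_natCast,
    Nat.cast_add_one]
  gcongr
  · exact le_add_of_nonneg_left n.cast_nonneg
  · exact n.sub_le 1

theorem summable_norm_endofunctionEGF {z : 𝕜} (hz : ‖z‖ < exp (-1)) :
    Summable fun n : ℕ ↦ ‖(n : 𝕜) ^ n / n ! * z ^ n‖ := by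
  refine summable_norm_mul_pow_of_norm_le_succ_pow_div_factorial (fun n ↦ ?_) hz
  rw [norm_div, norm_pow, RCLike.norm_natCast, RCLike.norm_natCast]
  gcongr
  exact le_add_of_nonneg_right zero_le_one

theorem rootedForestEGF_mul_endofunctionEGF {z : 𝕜} (hz : ‖z‖ < exp (-1)) :
    rootedForestEGF z * endofunctionEGF z = partialFunctionEGF z := by
  rw [rootedForestEGF, endofunctionEGF, tsum_mul_tsum_eq_tsum_sum_range_of_summable_norm (R := 𝕜)
    (summable_norm_rootedForestEGF hz) (summable_norm_endofunctionEGF hz)]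
  refine tsum_congr fun n ↦ ?_
  rw [← sum_choose_mul_succ_pow_pred_mul_sub_pow, sum_div, sum_mul]
  refine sum_congr rfl fun i hi ↦ ?_
  have hin : i ≤ n := mem_range_succ_iff.mp hi
  have n_factorial_ne_zero : (n ! : 𝕜) ≠ 0 := Nat.cast_ne_zero.mpr n.factorial_ne_zero
  rw [Nat.cast_choose 𝕜 hin, ← pow_mul_pow_sub z hin]
  field_simp

theorem endofunctionEGF_eq_one_add_mul_partialFunctionEGF {z : 𝕜} (hz : ‖z‖ < exp (-1)) :
    endofunctionEGF z = 1 + z * partialFunctionEGF z := by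
  rw [endofunctionEGF, (summable_norm_endofunctionEGF hz).of_norm.tsum_eq_zero_add,
    partialFunctionEGF, ← tsum_mul_left]
  congr 1
  · simp
  refine tsum_congr fun n ↦ ?_
  rw [Nat.factorial_succ]
  push_cast
  have succ_ne_zero : (n : 𝕜) + 1 ≠ 0 := n.cast_add_one_ne_zero
  field_simp
  ring

end GeneratingFunctions

section Borel

variable (μ θ : ℝ)

theorem exp_mul_borelWeight (n : ℕ) :
    exp (θ * ((n : ℝ) + 1)) * borelWeight μ n =
      exp (θ - μ) * (((n : ℝ) + 1) ^ n / (n + 1)! * (μ * exp (θ - μ)) ^ n) := by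
  have exp_eq : exp (θ * ((n : ℝ) + 1)) * exp (-((n : ℝ) + 1) * μ) = exp (θ - μ) ^ (n + 1) := by
    rw [← exp_add, ← exp_nat_mul]
    push_cast
    ring_nf
  rw [borelWeight, mul_pow, mul_pow]
  linear_combination ((n : ℝ) + 1) ^ n * μ ^ n / (n + 1)! * exp_eq

theorem borelPhi_eq_exp_mul_rootedForestEGF :
    borelPhi μ θ = exp (θ - μ) * rootedForestEGF (μ * exp (θ - μ)) := by
  rw [borelPhi, rootedForestEGF, ← tsum_mul_left]
  refine tsum_congr fun n ↦ ?_
  rw [exp_mul_borelWeight]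
  congr 2
  rcases n with _ | n
  · simp
  · rw [Nat.factorial_succ (n + 1), Nat.add_sub_cancel]
    push_cast
    field_simp
    ring

theorem borelPsi_eq_exp_mul_partialFunctionEGF :
    borelPsi μ θ = exp (θ - μ) * partialFunctionEGF (μ * exp (θ - μ)) := by
  rw [borelPsi, partialFunctionEGF, ← tsum_mul_left]
  refine tsum_congr fun n ↦ ?_
  rw [mul_assoc, exp_mul_borelWeight, Nat.factorial_succ]
  push_cast
  field_simp

variable {μ θ}

theorem borelPhi_mul_one_add_mul_borelPsi (hμθ : |μ| * exp (θ - μ) < exp (-1)) :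
    borelPhi μ θ * (1 + μ * borelPsi μ θ) = borelPsi μ θ := by
  have hz : ‖μ * exp (θ - μ)‖ < exp (-1) := by rwa [norm_mul, norm_eq_abs, norm_eq_abs, abs_exp]
  rw [borelPhi_eq_exp_mul_rootedForestEGF, borelPsi_eq_exp_mul_partialFunctionEGF, ← mul_assoc μ,
    ← endofunctionEGF_eq_one_add_mul_partialFunctionEGF hz, mul_assoc,
    rootedForestEGF_mul_endofunctionEGF hz]

theorem one_add_mul_borelPsi_ne_zero (hμθ : |μ| * exp (θ - μ) < exp (-1)) :
    1 + μ * borelPsi μ θ ≠ 0 := by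
  intro h
  have psi_eq_zero : borelPsi μ θ = 0 := by
    rw [← borelPhi_mul_one_add_mul_borelPsi hμθ, h, mul_zero]
  simp [psi_eq_zero] at h

theorem mul_exp_sub_lt_exp_neg_one_iff (hμ : 0 < μ) :
    μ * exp (θ - μ) < exp (-1) ↔ θ < μ - 1 - log μ := by
  rw [← log_lt_log_iff (by positivity) (exp_pos _), log_mul hμ.ne' (exp_ne_zero _), log_exp,
    log_exp]
  constructor <;> intro h <;> linarith

theorem borelPsi_eq_iff_borelPhi_eq_general {ν x : ℝ} (hν : ν ≠ 0) (hνx : ν + μ * x ≠ 0)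
    (hμθ : |μ| * exp (θ - μ) < exp (-1)) :
    borelPsi μ θ = x / ν ↔ borelPhi μ θ = x / (ν + μ * x) := by
  have phi_mul_eq_psi := borelPhi_mul_one_add_mul_borelPsi hμθ
  rw [eq_div_iff hν, eq_div_iff hνx,
    ← mul_left_inj' (one_add_mul_borelPsi_ne_zero hμθ) (a := borelPhi μ θ * _)]
  constructor <;> intro h
  · linear_combination (ν + μ * x) * phi_mul_eq_psi + h
  · linear_combination h - (ν + μ * x) * phi_mul_eq_psi

end Borel

/-- For `0 < μ < 1`, `ν > 0`, `x > 0` and `θ < θ₀(μ) = μ - 1 - log μ`: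
`ψ_μ(θ) = x/ν` iff `φ_μ(θ) = x/(ν + μx)`. -/
theorem borelPsi_eq_iff_borelPhi_eq (μ ν x θ : ℝ) (hμ0 : 0 < μ) (hμ1 : μ < 1)
    (hν : 0 < ν) (hx : 0 < x) (hθ : θ < μ - 1 - Real.log μ) :
    borelPsi μ θ = x / ν ↔ borelPhi μ θ = x / (ν + μ * x) :=
  borelPsi_eq_iff_borelPhi_eq_general hν.ne' (by positivity)
    (by rwa [abs_of_pos hμ0, mul_exp_sub_lt_exp_neg_one_iff hμ0])
end

section
/- (Rate function of the scalar LDP for Hawkes processes, Theorem 3.3.) Let 0 < μ < 1, θ₀(μ) = μ − 1 − log μ, φ_μ(θ) = Σ_{k=1}^∞ e^{θk}·e^{−kμ}(kμ)^{k−1}/k!, ψ_μ(θ) = Σ_{k=1}^∞ k·e^{θk}·e^{−kμ}(kμ)^{k−1}/k!, ν > 0 and x > 0, and let θ_x be the unique θ < θ₀(μ) with ψ_μ(θ) = x/ν. Then the supremum of the set { θ·x − ν(φ_μ(θ) − 1) : θ ≤ θ₀(μ) } equals x·θ_x + ν − νx/(ν + μx), and this supremum is attained at θ = θ_x. -/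
/-!
Put `t = μ e^{θ - μ}`. Then `μ φ_μ(θ)` is the tree function `T(t) = ∑_{k ≥ 1} k^{k-1} t^k / k!`,
while `1 + μ ψ_μ(θ)` is `E(t) = ∑_{k ≥ 0} k^k t^k / k!`, and `θ ≤ θ₀(μ)` says that `t ≤ e⁻¹`.
Abel's identity `∑_{k=1}^n C(n, k) k^{k-1} (n - k)^{n-k} = n^n` amounts to `T E = E - 1`, that is,
`φ_μ = ψ_μ / (1 + μ ψ_μ)`. Since `ψ_μ` is the derivative of the convex function `φ_μ`, the concave
function `θ ↦ θ x - ν (φ_μ(θ) - 1)` lies below its horizontal tangent at the point `θ_x` where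
`ν ψ_μ(θ_x) = x`.
-/

section AbelIdentity

open Finset Polynomial

theorem sum_neg_one_pow_mul_choose_mul_pow_eq_zero {R : Type*} [CommRing R] {m n : ℕ}
    (hmn : m < n) :
    ∑ k ∈ range (n + 1), (-1 : R) ^ (n - k) * n.choose k * (k : R) ^ m = 0 := by
  have hdiff := congrFun (fwdDiff_iter_pow_eq_zero_of_lt (R := R) hmn) 0
  rw [fwdDiff_iter_eq_sum_shift] at hdiff
  simpa using hdiff

/-- The left-hand side of Abel's identity
`∑_{k=1}^{n+1} C(n+1, k) k^{k-1} (X - k)^{n+1-k} = (n + 1) X^n`, indexed by `j = k - 1`. It is a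
polynomial so that the identity follows by induction on `n` upon differentiating. -/
noncomputable def abelSum (n : ℕ) : ℤ[X] :=
  ∑ j ∈ range (n + 1), C ((n + 1).choose (j + 1) * (j + 1) ^ j : ℤ) * (X - C (j + 1 : ℤ)) ^ (n - j)

theorem derivative_abelSum_succ (n : ℕ) :
    derivative (abelSum (n + 1)) = C (n + 2 : ℤ) * abelSum n := by
  have choose_mul_sub (j : ℕ) :
      ((n + 2).choose (j + 1) : ℤ) * (n + 1 - j : ℕ) = (n + 2) * (n + 1).choose (j + 1) := by
    have h := Nat.choose_mul_succ_eq (n + 1) (j + 1)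
    rw [show n + 1 + 1 - (j + 1) = n + 1 - j by lia] at h
    zify at h
    linarith
  rw [abelSum, sum_range_succ, derivative_add, derivative_sum, abelSum, mul_sum]
  simp only [Nat.sub_self, pow_zero, mul_one, derivative_C, add_zero]
  refine sum_congr rfl fun j _ ↦ ?_
  rw [derivative_C_mul, derivative_X_sub_C_pow, show n + 1 - j - 1 = n - j by lia, ← mul_assoc,
    ← mul_assoc, ← C_mul, ← C_mul]
  congr 2
  linear_combination (j + 1 : ℤ) ^ j * choose_mul_sub j

theorem coeff_zero_abelSum {n : ℕ} (hn : n ≠ 0) : (abelSum n).coeff 0 = 0 := by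
  have hsum := sum_neg_one_pow_mul_choose_mul_pow_eq_zero (R := ℤ) n.lt_succ_self
  rw [sum_range_succ'] at hsum
  simp only [Nat.succ_eq_add_one, Nat.add_sub_add_right, Nat.cast_zero, zero_pow hn, mul_zero,
    add_zero] at hsum
  rw [abelSum, coeff_zero_eq_eval_zero, eval_finsetSum]
  refine (sum_congr rfl fun j hj ↦ ?_).trans hsum
  have hjn : j + (n - j) = n := Nat.add_sub_of_le (Nat.lt_succ_iff.mp (mem_range.mp hj))
  calc eval (0 : ℤ) (C ((n + 1).choose (j + 1) * (j + 1) ^ j : ℤ) * (X - C (j + 1 : ℤ)) ^ (n - j))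
      = ((n + 1).choose (j + 1) : ℤ) * (j + 1) ^ j * (-(j + 1)) ^ (n - j) := by
        simp only [eval_mul, eval_C, eval_pow, eval_sub, eval_X, zero_sub]
    _ = (-1) ^ (n - j) * (n + 1).choose (j + 1) * (j + 1) ^ (j + (n - j)) := by
        rw [neg_pow, pow_add]; ring
    _ = (-1) ^ (n - j) * (n + 1).choose (j + 1) * ((j + 1 : ℕ) : ℤ) ^ n := by
        rw [hjn, Nat.cast_succ]

theorem abelSum_eq (n : ℕ) : abelSum n = C (n + 1 : ℤ) * X ^ n := by
  induction n with
  | zero => simp [abelSum]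
  | succ n ih =>
    have hderiv : derivative (abelSum (n + 1) - C (n + 2 : ℤ) * X ^ (n + 1)) = 0 := by
      rw [derivative_sub, derivative_abelSum_succ, ih, derivative_C_mul_X_pow, ← mul_assoc, ← C_mul,
        Nat.cast_succ, Nat.add_sub_cancel, sub_self]
    have hcoeff : (abelSum (n + 1) - C (n + 2 : ℤ) * X ^ (n + 1)).coeff 0 = 0 := by
      rw [coeff_sub, coeff_zero_abelSum n.succ_ne_zero, coeff_C_mul_X_pow, if_neg (by lia),
        sub_zero]
    have hcast : ((n + 1 : ℕ) + 1 : ℤ) = n + 2 := by push_cast; ring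
    rw [hcast, ← sub_eq_zero, eq_C_of_derivative_eq_zero hderiv, hcoeff, C_0]

theorem sum_antidiagonal_choose_mul_pow_mul_pow (n : ℕ) :
    ∑ p ∈ antidiagonal n, (n + 1).choose (p.1 + 1) * (p.1 + 1) ^ p.1 * p.2 ^ p.2 =
      (n + 1) ^ (n + 1) := by
  have heval := congrArg (eval (n + 1 : ℤ)) (abelSum_eq n)
  simp only [abelSum, eval_finsetSum, eval_mul, eval_C, eval_pow, eval_sub, eval_X] at heval
  rw [Nat.sum_antidiagonal_eq_sum_range_succ_mk]
  zify
  rw [pow_succ', ← heval]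
  refine sum_congr rfl fun j hj ↦ ?_
  rw [Nat.cast_sub (Nat.lt_succ_iff.mp (mem_range.mp hj)), add_sub_add_right_eq_sub]

end AbelIdentity

section TreeFunction

open Finset Real
open scoped Nat

/-- The tree function `T(t) = ∑_{k ≥ 1} k^{k-1} t^k / k!`, the exponential generating function of
rooted labelled trees, indexed by `n = k - 1`. -/
noncomputable def treeFunction (t : ℝ) : ℝ :=
  ∑' n : ℕ, (n + 1 : ℝ) ^ n / (n + 1)! * t ^ (n + 1)

/-- The exponential generating function `E(t) = ∑_{k ≥ 0} k^k t^k / k!` of the self-maps of a finite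
set; the term `k = 0` is `1`. -/
noncomputable def selfMapSeries (t : ℝ) : ℝ :=
  ∑' k : ℕ, (k : ℝ) ^ k / k ! * t ^ k

variable {t : ℝ}

theorem pow_self_div_factorial_le_exp_div_sqrt {n : ℕ} (hn : n ≠ 0) :
    (n : ℝ) ^ n / n ! ≤ exp n / √n := by
  have hn' : (0 : ℝ) < n := by positivity
  have hsqrt : √n ≤ √(2 * π * n) := sqrt_le_sqrt (by nlinarith [pi_gt_three])
  rw [div_le_div_iff₀ (by positivity) (by positivity)]
  calc (n : ℝ) ^ n * √n ≤ (n : ℝ) ^ n * √(2 * π * n) := by gcongr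
    _ = exp n * (√(2 * π * n) * (n / exp 1) ^ n) := by
        rw [div_pow, ← exp_nat_mul, mul_one]; field_simp
    _ ≤ exp n * n ! := by gcongr; exact Stirling.le_factorial_stirling n

theorem exp_one_mul_lt_one_iff {s : ℝ} : exp 1 * s < 1 ↔ s < exp (-1) := by
  rw [exp_neg, ← one_div, lt_div_iff₀' (exp_pos 1)]

theorem exp_one_mul_le_one_iff {s : ℝ} : exp 1 * s ≤ 1 ↔ s ≤ exp (-1) := by
  rw [exp_neg, ← one_div, le_div_iff₀' (exp_pos 1)]

theorem summable_norm_treeFunction (ht : |t| ≤ exp (-1)) :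
    Summable fun n : ℕ ↦ ‖(n + 1 : ℝ) ^ n / (n + 1)! * t ^ (n + 1)‖ := by
  have hsum : Summable fun n : ℕ ↦ 1 / ((n + 1 : ℕ) : ℝ) ^ (3 / 2 : ℝ) :=
    (summable_nat_add_iff 1).mpr (summable_one_div_nat_rpow.mpr (by norm_num))
  refine hsum.of_nonneg_of_le (fun n ↦ norm_nonneg _) fun n ↦ ?_
  have hcoeff := pow_self_div_factorial_le_exp_div_sqrt n.succ_ne_zero
  have hrpow : ((n + 1 : ℕ) : ℝ) ^ (3 / 2 : ℝ) = √(n + 1 : ℕ) * (n + 1) := by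
    rw [sqrt_eq_rpow, ← Nat.cast_succ, ← rpow_add_one (by positivity)]
    norm_num
  calc ‖(n + 1 : ℝ) ^ n / (n + 1)! * t ^ (n + 1)‖
      = ((n + 1 : ℕ) : ℝ) ^ (n + 1) / (n + 1)! / (n + 1) * |t| ^ (n + 1) := by
        rw [norm_mul, norm_of_nonneg (by positivity), norm_pow, norm_eq_abs, Nat.cast_succ,
          pow_succ (n + 1 : ℝ)]
        field_simp
    _ ≤ exp (n + 1 : ℕ) / √(n + 1 : ℕ) / (n + 1) * |t| ^ (n + 1) := by gcongr
    _ = (exp 1 * |t|) ^ (n + 1) / ((n + 1 : ℕ) : ℝ) ^ (3 / 2 : ℝ) := by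
        rw [hrpow, mul_pow, ← exp_nat_mul, mul_one]; field_simp
    _ ≤ 1 / ((n + 1 : ℕ) : ℝ) ^ (3 / 2 : ℝ) := by
        gcongr
        exact pow_le_one₀ (by positivity) (exp_one_mul_le_one_iff.mpr ht)

theorem summable_norm_selfMapSeries (ht : |t| < exp (-1)) :
    Summable fun k : ℕ ↦ ‖(k : ℝ) ^ k / k ! * t ^ k‖ := by
  have hgeom := summable_geometric_of_lt_one (by positivity) (exp_one_mul_lt_one_iff.mpr ht)
  refine hgeom.of_nonneg_of_le (fun k ↦ norm_nonneg _) fun k ↦ ?_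
  rw [norm_mul, norm_of_nonneg (by positivity), norm_pow, norm_eq_abs, mul_pow, ← exp_nat_mul,
    mul_one]
  gcongr
  exact pow_div_factorial_le_exp _ (by positivity) k

theorem selfMapSeries_sub_one (ht : |t| < exp (-1)) :
    selfMapSeries t - 1 = ∑' n : ℕ, (n + 1 : ℝ) ^ (n + 1) / (n + 1)! * t ^ (n + 1) := by
  simp [selfMapSeries, (summable_norm_selfMapSeries ht).of_norm.tsum_eq_zero_add]

theorem sum_antidiagonal_treeFunction_coeff_mul_selfMapSeries_coeff (n : ℕ) :
    ∑ p ∈ antidiagonal n, (p.1 + 1 : ℝ) ^ p.1 / (p.1 + 1)! * ((p.2 : ℝ) ^ p.2 / p.2 !) =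
      (n + 1 : ℝ) ^ (n + 1) / (n + 1)! := by
  have habel : (∑ p ∈ antidiagonal n,
      ((n + 1).choose (p.1 + 1) : ℝ) * (p.1 + 1) ^ p.1 * (p.2 : ℝ) ^ p.2) = (n + 1) ^ (n + 1) := by
    exact_mod_cast sum_antidiagonal_choose_mul_pow_mul_pow n
  rw [← habel, sum_div]
  refine sum_congr rfl fun p hp ↦ ?_
  obtain rfl : p.1 + p.2 = n := mem_antidiagonal.mp hp
  rw [show p.1 + p.2 + 1 = p.1 + 1 + p.2 by ring, Nat.cast_add_choose]
  field_simp

/- Combinatorially, a self-map is a permutation of the rooted trees hanging off its cycles, so that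
`E = 1 / (1 - T)`. -/
theorem treeFunction_mul_selfMapSeries (ht : |t| < exp (-1)) :
    treeFunction t * selfMapSeries t = selfMapSeries t - 1 := by
  rw [selfMapSeries_sub_one ht, treeFunction, selfMapSeries,
    tsum_mul_tsum_eq_tsum_sum_antidiagonal_of_summable_norm
      (summable_norm_treeFunction ht.le) (summable_norm_selfMapSeries ht)]
  refine tsum_congr fun n ↦ ?_
  rw [← sum_antidiagonal_treeFunction_coeff_mul_selfMapSeries_coeff, sum_mul]
  refine sum_congr rfl fun p hp ↦ ?_
  obtain rfl : p.1 + p.2 = n := mem_antidiagonal.mp hp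
  ring

end TreeFunction

section Borel

open Real
open scoped Nat

theorem tsum_exp_mul_tangent_le {ι : Type*} {a w : ι → ℝ} {θ θ' : ℝ} (hw : ∀ i, 0 ≤ w i)
    (hθ : Summable fun i ↦ exp (θ * a i) * w i)
    (hθ_deriv : Summable fun i ↦ a i * exp (θ * a i) * w i)
    (hθ' : Summable fun i ↦ exp (θ' * a i) * w i) :
    ∑' i, exp (θ * a i) * w i + (∑' i, a i * exp (θ * a i) * w i) * (θ' - θ) ≤
      ∑' i, exp (θ' * a i) * w i := by
  rw [← tsum_mul_right, ← hθ.tsum_add (hθ_deriv.mul_right _)]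
  refine (hθ.add (hθ_deriv.mul_right _)).tsum_le_tsum (fun i ↦ ?_) hθ'
  calc exp (θ * a i) * w i + a i * exp (θ * a i) * w i * (θ' - θ)
      = exp (θ * a i) * ((θ' - θ) * a i + 1) * w i := by ring
    _ ≤ exp (θ * a i) * exp ((θ' - θ) * a i) * w i := by
        have := hw i
        gcongr
        exact add_one_le_exp _
    _ = exp (θ' * a i) * w i := by rw [← exp_add]; ring_nf

variable {μ θ : ℝ}

theorem borelWeight_nonneg (hμ : 0 ≤ μ) (n : ℕ) : 0 ≤ borelWeight μ n := by
  unfold borelWeight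
  positivity

theorem abs_mul_exp_sub_le_exp_neg_one (hμ : 0 < μ) (hθ : θ ≤ μ - 1 - log μ) :
    |μ * exp (θ - μ)| ≤ exp (-1) := by
  rw [abs_of_pos (by positivity), ← exp_log hμ, ← exp_add, exp_le_exp, exp_log hμ]
  linarith

theorem abs_mul_exp_sub_lt_exp_neg_one (hμ : 0 < μ) (hθ : θ < μ - 1 - log μ) :
    |μ * exp (θ - μ)| < exp (-1) := by
  rw [abs_of_pos (by positivity), ← exp_log hμ, ← exp_add, exp_lt_exp, exp_log hμ]
  linarith

theorem mul_exp_mul_borelWeight (μ θ : ℝ) (n : ℕ) :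
    μ * (exp (θ * (n + 1)) * borelWeight μ n) =
      (n + 1 : ℝ) ^ n / (n + 1)! * (μ * exp (θ - μ)) ^ (n + 1) := by
  have hexp : exp (θ - μ) ^ (n + 1) = exp (θ * (n + 1)) * exp (-((n : ℝ) + 1) * μ) := by
    rw [← exp_nat_mul, ← exp_add]
    push_cast
    ring_nf
  rw [borelWeight, mul_pow, mul_pow, hexp, pow_succ]
  ring

theorem mul_succ_mul_exp_mul_borelWeight (μ θ : ℝ) (n : ℕ) :
    μ * ((n + 1) * exp (θ * (n + 1)) * borelWeight μ n) =
      (n + 1 : ℝ) ^ (n + 1) / (n + 1)! * (μ * exp (θ - μ)) ^ (n + 1) := by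
  linear_combination (n + 1 : ℝ) * mul_exp_mul_borelWeight μ θ n

theorem summable_borelPhi (hμ : 0 < μ) (hθ : θ ≤ μ - 1 - log μ) :
    Summable fun n : ℕ ↦ exp (θ * (n + 1)) * borelWeight μ n := by
  rw [← summable_mul_left_iff hμ.ne']
  simp only [mul_exp_mul_borelWeight]
  exact (summable_norm_treeFunction (abs_mul_exp_sub_le_exp_neg_one hμ hθ)).of_norm

theorem summable_borelPsi (hμ : 0 < μ) (hθ : θ < μ - 1 - log μ) :
    Summable fun n : ℕ ↦ (n + 1) * exp (θ * (n + 1)) * borelWeight μ n := by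
  have hsum := (summable_norm_selfMapSeries (abs_mul_exp_sub_lt_exp_neg_one hμ hθ)).of_norm
  rw [← summable_mul_left_iff hμ.ne']
  simp only [mul_succ_mul_exp_mul_borelWeight]
  exact_mod_cast (summable_nat_add_iff 1).mpr hsum

theorem mul_borelPhi (μ θ : ℝ) : μ * borelPhi μ θ = treeFunction (μ * exp (θ - μ)) := by
  simp only [borelPhi, treeFunction, ← tsum_mul_left, mul_exp_mul_borelWeight]

theorem one_add_mul_borelPsi (hμ : 0 < μ) (hθ : θ < μ - 1 - log μ) :
    1 + μ * borelPsi μ θ = selfMapSeries (μ * exp (θ - μ)) := by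
  rw [eq_comm, ← sub_eq_iff_eq_add', selfMapSeries_sub_one (abs_mul_exp_sub_lt_exp_neg_one hμ hθ)]
  simp only [borelPsi, ← tsum_mul_left, mul_succ_mul_exp_mul_borelWeight]

theorem borelPsi_nonneg (hμ : 0 ≤ μ) (θ : ℝ) : 0 ≤ borelPsi μ θ :=
  tsum_nonneg fun n ↦ mul_nonneg (by positivity) (borelWeight_nonneg hμ n)

theorem borelPhi_eq_borelPsi_div (hμ : 0 < μ) (hθ : θ < μ - 1 - log μ) :
    borelPhi μ θ = borelPsi μ θ / (1 + μ * borelPsi μ θ) := by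
  have hden : 0 < 1 + μ * borelPsi μ θ := by
    have := borelPsi_nonneg hμ.le θ
    positivity
  have htree := treeFunction_mul_selfMapSeries (abs_mul_exp_sub_lt_exp_neg_one hμ hθ)
  rw [← mul_borelPhi, ← one_add_mul_borelPsi hμ hθ, add_sub_cancel_left, mul_assoc] at htree
  exact (eq_div_iff hden.ne').mpr (mul_left_cancel₀ hμ.ne' htree)

theorem borelPhi_tangent_le {θ' : ℝ} (hμ : 0 < μ) (hθ : θ < μ - 1 - log μ)
    (hθ' : θ' ≤ μ - 1 - log μ) :
    borelPhi μ θ + borelPsi μ θ * (θ' - θ) ≤ borelPhi μ θ' :=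
  tsum_exp_mul_tangent_le (borelWeight_nonneg hμ.le) (summable_borelPhi hμ hθ.le)
    (summable_borelPsi hμ hθ) (summable_borelPhi hμ hθ')

end Borel

theorem hawkes_rate_function_general (μ ν x θx : ℝ) (hμ : 0 < μ) (hν : 0 < ν)
    (hθx : θx < μ - 1 - Real.log μ) (hψ : borelPsi μ θx = x / ν) :
    IsGreatest {y : ℝ | ∃ θ ≤ μ - 1 - Real.log μ, y = θ * x - ν * (borelPhi μ θ - 1)}
        (x * θx + ν - ν * x / (ν + μ * x)) ∧
      θx * x - ν * (borelPhi μ θx - 1) = x * θx + ν - ν * x / (ν + μ * x) := by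
  have hphi : borelPhi μ θx = x / (ν + μ * x) := by
    rw [borelPhi_eq_borelPsi_div hμ hθx, hψ]
    field_simp
  have hvalue : θx * x - ν * (borelPhi μ θx - 1) = x * θx + ν - ν * x / (ν + μ * x) := by
    rw [hphi]
    ring
  refine ⟨⟨⟨θx, hθx.le, hvalue.symm⟩, ?_⟩, hvalue⟩
  rintro _ ⟨θ, hθ, rfl⟩
  rw [← hvalue]
  have htangent : ν * borelPhi μ θx + x * (θ - θx) ≤ ν * borelPhi μ θ :=
    calc ν * borelPhi μ θx + x * (θ - θx)
        = ν * (borelPhi μ θx + borelPsi μ θx * (θ - θx)) := by rw [hψ]; field_simp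
      _ ≤ ν * borelPhi μ θ := by gcongr; exact borelPhi_tangent_le hμ hθx hθ
  linarith

/-- Rate function of the scalar LDP for Hawkes processes (Theorem 3.3):
for `0 < μ < 1`, `ν > 0`, `x > 0`, and `θ_x` the unique `θ < θ₀(μ) = μ - 1 - log μ`
with `ψ_μ(θ) = x/ν`, the supremum of `{θx - ν(φ_μ(θ) - 1) : θ ≤ θ₀(μ)}` equals
`xθ_x + ν - νx/(ν + μx)` and is attained at `θ = θ_x`. -/
theorem hawkes_rate_function (μ ν x θx : ℝ) (hμ0 : 0 < μ) (hμ1 : μ < 1)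
    (hν : 0 < ν) (hx : 0 < x) (hθx : θx < μ - 1 - Real.log μ)
    (hψ : borelPsi μ θx = x / ν) :
    IsGreatest {y : ℝ | ∃ θ ≤ μ - 1 - Real.log μ, y = θ * x - ν * (borelPhi μ θ - 1)}
        (x * θx + ν - ν * x / (ν + μ * x)) ∧
      θx * x - ν * (borelPhi μ θx - 1) = x * θx + ν - ν * x / (ν + μ * x) :=
  hawkes_rate_function_general μ ν x θx hμ0 hν hθx hψ
end
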